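/- Let L be a DGLA, A a local Artinian ℂ-algebra, and 0 → I → A → Ā → 0 a small extension (I·m_A = 0). Let x ∈ MC_L(Ā) and let x̃ ∈ L^1 ⊗ m_A be any set-theoretic lifting of x. Then the element h = dx̃ + ½[x̃,x̃] lies in L^2 ⊗ I, satisfies dh = 0, and its cohomology class in H^2(L,d) ⊗ I is independent of the choice of lifting x̃. -/

import Mathlib

open scoped TensorProduct

/-- The sign `(-1)^k` as an integer. -/
def gsign (k : ℤ) : ℤ := if Even k then 1 else -1

/-- A (ℤ-graded) differential graded Lie algebra over a commutative ring `R`,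
presented internally: a module `V` with a grading by submodules, a degree `1`
differential squaring to zero, and a bracket satisfying graded skew-symmetry,
the graded Jacobi identity and the graded Leibniz rule. -/
structure DGLA (R : Type) [CommRing R] where
  V : Type
  [instAddCommGroup : AddCommGroup V]
  [instModule : Module R V]
  grade : ℤ → Submodule R V
  internal : DirectSum.IsInternal grade
  d : V →ₗ[R] V
  d_mem : ∀ (i : ℤ) (x : V), x ∈ grade i → d x ∈ grade (i + 1)
  d_sq : ∀ x : V, d (d x) = 0
  bracket : V →ₗ[R] V →ₗ[R] V
  bracket_mem : ∀ (i j : ℤ) (x y : V), x ∈ grade i → y ∈ grade j →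
    bracket x y ∈ grade (i + j)
  skew : ∀ (i j : ℤ) (x y : V), x ∈ grade i → y ∈ grade j →
    bracket x y + gsign (i * j) • bracket y x = 0
  jacobi : ∀ (i j : ℤ) (x y z : V), x ∈ grade i → y ∈ grade j →
    bracket x (bracket y z) =
      bracket (bracket x y) z + gsign (i * j) • bracket y (bracket x z)
  leibniz : ∀ (i : ℤ) (x y : V), x ∈ grade i →
    d (bracket x y) = bracket (d x) y + gsign i • bracket x (d y)

attribute [instance] DGLA.instAddCommGroup DGLA.instModule

namespace DGLA

variable (L : DGLA ℂ) (A : Type) [CommRing A] [Algebra ℂ A]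

/-- The differential of the base change `L ⊗_ℂ A`. -/
noncomputable def dA : A ⊗[ℂ] L.V →ₗ[A] A ⊗[ℂ] L.V :=
  LinearMap.baseChange A L.d

/-- The bracket of the base change `L ⊗_ℂ A`. -/
noncomputable def brA : A ⊗[ℂ] L.V →ₗ[A] A ⊗[ℂ] L.V →ₗ[A] A ⊗[ℂ] L.V :=
  TensorProduct.curry
    ((LinearMap.baseChange A (TensorProduct.lift L.bracket)) ∘ₗ
      (TensorProduct.AlgebraTensorModule.distribBaseChange ℂ A L.V L.V).symm.toLinearMap)

/-- The base change of the grading: `L^i ⊗_ℂ A` inside `A ⊗_ℂ L`. -/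
noncomputable def gradeA (i : ℤ) : Submodule A (A ⊗[ℂ] L.V) :=
  (L.grade i).baseChange A

/-- The Maurer-Cartan equation `d x + ½ [x,x] = 0` in `L ⊗ A`. -/
noncomputable def IsMC (x : A ⊗[ℂ] L.V) : Prop :=
  L.dA A x + algebraMap ℂ A 2⁻¹ • L.brA A x x = 0

/-- The gauge action `e^a * x = x + Σ_{n≥0} ([a,-]^n/(n+1)!)([a,x] - da)`,
truncated at `N`; when the coefficients of `a` and `x` lie in an ideal `J`
with `J ^ N = ⊥`, all further terms of the series vanish, so this is the
full gauge action. -/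
noncomputable def gauge (N : ℕ) (a x : A ⊗[ℂ] L.V) : A ⊗[ℂ] L.V :=
  x + ∑ n ∈ Finset.range N,
    algebraMap ℂ A (((n + 1).factorial : ℂ))⁻¹ •
      (((L.brA A a) ^ n) (L.brA A a x - L.dA A a))

/-- Gauge equivalence (for coefficients in a nilpotent ideal `J`). -/
noncomputable def GaugeEq (J : Ideal A) (x y : A ⊗[ℂ] L.V) : Prop :=
  ∃ a ∈ J • L.gradeA A 0, ∃ N : ℕ, J ^ N = ⊥ ∧ L.gauge A N a x = y

/-- Cocycles of degree `i` of a DGLA over `ℂ`. -/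
def cocycles (i : ℤ) : Submodule ℂ L.V :=
  L.grade i ⊓ LinearMap.ker L.d

/-- Degree `i` cohomology `H^i(L, d)` of a DGLA over `ℂ`. -/
abbrev cohomology (i : ℤ) :=
  L.cocycles i ⧸
    Submodule.comap (L.cocycles i).subtype (Submodule.map L.d (L.grade (i - 1)))

end DGLA

namespace DGLA

lemma brA_tmul (L : DGLA ℂ) (A : Type) [CommRing A] [Algebra ℂ A] (a b : A) (x y : L.V) :
    L.brA A (a ⊗ₜ x) (b ⊗ₜ y) = (a * b) ⊗ₜ L.bracket x y := by
  have hx : a ⊗ₜ[ℂ] x = a • ((1 : A) ⊗ₜ[ℂ] x) := by simp [TensorProduct.smul_tmul']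
  have hy : b ⊗ₜ[ℂ] y = b • ((1 : A) ⊗ₜ[ℂ] y) := by simp [TensorProduct.smul_tmul']
  have h : L.brA A (1 ⊗ₜ x) (1 ⊗ₜ y) = 1 ⊗ₜ L.bracket x y := by
    have e : (TensorProduct.AlgebraTensorModule.distribBaseChange ℂ A L.V L.V).symm
        ((1 ⊗ₜ x) ⊗ₜ (1 ⊗ₜ y)) = (1 : A) ⊗ₜ[ℂ] (x ⊗ₜ[ℂ] y) := by
      rw [LinearEquiv.symm_apply_eq]
      simp [TensorProduct.AlgebraTensorModule.distribBaseChange]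
    simp only [brA, TensorProduct.curry_apply, LinearMap.comp_apply, LinearEquiv.coe_coe]
    rw [e]
    simp
  rw [hx, hy]
  simp only [map_smul, LinearMap.smul_apply, h]
  simp [TensorProduct.smul_tmul', mul_comm]

lemma dA_tmul (L : DGLA ℂ) (A : Type) [CommRing A] [Algebra ℂ A] (a : A) (x : L.V) :
    L.dA A (a ⊗ₜ x) = a ⊗ₜ L.d x := by simp [dA]

lemma dA_sq (L : DGLA ℂ) (A : Type) [CommRing A] [Algebra ℂ A] (x : A ⊗[ℂ] L.V) :
    L.dA A (L.dA A x) = 0 := by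
  induction x with
  | zero => simp
  | add x y hx hy => simp [hx, hy]
  | tmul a x => simp [dA_tmul, L.d_sq]

lemma gradeA_induction (L : DGLA ℂ) (A : Type) [CommRing A] [Algebra ℂ A] (i : ℤ)
    (p : A ⊗[ℂ] L.V → Prop)
    (h0 : p 0) (hadd : ∀ x y, p x → p y → p (x + y))
    (ht : ∀ (a : A) x, x ∈ L.grade i → p (a ⊗ₜ x))
    (x : A ⊗[ℂ] L.V) (hx : x ∈ L.gradeA A i) : p x := by
  rw [gradeA, Submodule.baseChange] at hx
  obtain ⟨y, rfl⟩ := hx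
  induction y with
  | zero => simpa using h0
  | add x y hx hy => rw [map_add]; exact hadd _ _ hx hy
  | tmul a x => simpa using ht a x x.2

lemma tmul_mem_gradeA (L : DGLA ℂ) (A : Type) [CommRing A] [Algebra ℂ A] (i : ℤ) (a : A)
    (x : L.V) (hx : x ∈ L.grade i) : a ⊗ₜ x ∈ L.gradeA A i :=
  Submodule.tmul_mem_baseChange_of_mem a hx

lemma dA_mem' (L : DGLA ℂ) (A : Type) [CommRing A] [Algebra ℂ A] (i : ℤ)
    (x : A ⊗[ℂ] L.V) (hx : x ∈ L.gradeA A i) : L.dA A x ∈ L.gradeA A (i + 1) := by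
  refine L.gradeA_induction A i (fun x => L.dA A x ∈ L.gradeA A (i + 1)) ?_ ?_ ?_ x hx
  · simp
  · intro x y hx hy; rw [map_add]; exact add_mem hx hy
  · intro a x hx; rw [dA_tmul]; exact L.tmul_mem_gradeA A _ _ _ (L.d_mem _ _ hx)

lemma brA_mem' (L : DGLA ℂ) (A : Type) [CommRing A] [Algebra ℂ A] (i j : ℤ)
    (x y : A ⊗[ℂ] L.V) (hx : x ∈ L.gradeA A i) (hy : y ∈ L.gradeA A j) :
    L.brA A x y ∈ L.gradeA A (i + j) := by
  refine L.gradeA_induction A i (fun x => L.brA A x y ∈ L.gradeA A (i + j)) ?_ ?_ ?_ x hx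
  · simp
  · intro x y hx hy; rw [map_add]; exact add_mem hx hy
  intro a x hx
  refine L.gradeA_induction A j (fun y => L.brA A (a ⊗ₜ x) y ∈ L.gradeA A (i + j)) ?_ ?_ ?_ y hy
  · simp
  · intro x y hx hy; rw [map_add]; exact add_mem hx hy
  intro b y hy
  rw [brA_tmul]; exact L.tmul_mem_gradeA A _ _ _ (L.bracket_mem _ _ _ _ hx hy)

lemma skewA (L : DGLA ℂ) (A : Type) [CommRing A] [Algebra ℂ A] (i j : ℤ)
    (x y : A ⊗[ℂ] L.V) (hx : x ∈ L.gradeA A i) (hy : y ∈ L.gradeA A j) :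
    L.brA A x y + gsign (i * j) • L.brA A y x = 0 := by
  refine L.gradeA_induction A i
    (fun x => L.brA A x y + gsign (i * j) • L.brA A y x = 0) ?_ ?_ ?_ x hx
  · simp
  · intro x x' hx hx'
    simp only [map_add, LinearMap.add_apply, smul_add]
    rw [add_add_add_comm, hx, hx', add_zero]
  intro a x hx
  refine L.gradeA_induction A j
    (fun y => L.brA A (a ⊗ₜ x) y + gsign (i * j) • L.brA A y (a ⊗ₜ x) = 0) ?_ ?_ ?_ y hy
  · simp
  · intro x x' hx hx'
    simp only [map_add, LinearMap.add_apply, smul_add]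
    rw [add_add_add_comm, hx, hx', add_zero]
  intro b y hy
  rw [brA_tmul, brA_tmul, mul_comm b a, ← TensorProduct.tmul_smul, ← TensorProduct.tmul_add,
    L.skew i j x y hx hy, TensorProduct.tmul_zero]

lemma jacobiA (L : DGLA ℂ) (A : Type) [CommRing A] [Algebra ℂ A] (i j : ℤ)
    (x y z : A ⊗[ℂ] L.V) (hx : x ∈ L.gradeA A i) (hy : y ∈ L.gradeA A j) :
    L.brA A x (L.brA A y z) =
      L.brA A (L.brA A x y) z + gsign (i * j) • L.brA A y (L.brA A x z) := by
  refine L.gradeA_induction A i (fun x => L.brA A x (L.brA A y z) =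
      L.brA A (L.brA A x y) z + gsign (i * j) • L.brA A y (L.brA A x z)) ?_ ?_ ?_ x hx
  · simp
  · intro x x' hx hx'
    simp only [map_add, LinearMap.add_apply, smul_add]
    rw [hx, hx', add_add_add_comm]
  intro a x hx
  refine L.gradeA_induction A j (fun y => L.brA A (a ⊗ₜ x) (L.brA A y z) =
      L.brA A (L.brA A (a ⊗ₜ x) y) z +
        gsign (i * j) • L.brA A y (L.brA A (a ⊗ₜ x) z)) ?_ ?_ ?_ y hy
  · simp
  · intro x x' hx hx'
    simp only [map_add, LinearMap.add_apply, smul_add]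
    rw [hx, hx', add_add_add_comm]
  intro b y hy
  induction z with
  | zero => simp
  | add z z' h h' =>
    simp only [map_add, smul_add]
    rw [h, h', add_add_add_comm]
  | tmul c z =>
    simp only [brA_tmul]
    rw [L.jacobi i j x y z hx hy, TensorProduct.tmul_add, TensorProduct.tmul_smul,
      mul_assoc, mul_left_comm b a c]

lemma leibnizA (L : DGLA ℂ) (A : Type) [CommRing A] [Algebra ℂ A] (i : ℤ)
    (x y : A ⊗[ℂ] L.V) (hx : x ∈ L.gradeA A i) :
    L.dA A (L.brA A x y) = L.brA A (L.dA A x) y + gsign i • L.brA A x (L.dA A y) := by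
  refine L.gradeA_induction A i (fun x => L.dA A (L.brA A x y) =
    L.brA A (L.dA A x) y + gsign i • L.brA A x (L.dA A y)) ?_ ?_ ?_ x hx
  · simp
  · intro x x' hx hx'
    simp only [map_add, LinearMap.add_apply, smul_add]
    rw [hx, hx', add_add_add_comm]
  intro a x hx
  induction y with
  | zero => simp
  | add z z' h h' =>
    simp only [map_add, smul_add]
    rw [h, h', add_add_add_comm]
  | tmul c z =>
    simp only [brA_tmul, dA_tmul]
    rw [L.leibniz i x z hx, TensorProduct.tmul_add, TensorProduct.tmul_smul]

lemma brA_smul_zero (L : DGLA ℂ) (A : Type) [CommRing A] [Algebra ℂ A] (I J : Ideal A)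
    (h : I * J = ⊥) (x y : A ⊗[ℂ] L.V)
    (hx : x ∈ I • (⊤ : Submodule A (A ⊗[ℂ] L.V)))
    (hy : y ∈ J • (⊤ : Submodule A (A ⊗[ℂ] L.V))) :
    L.brA A x y = 0 ∧ L.brA A y x = 0 := by
  induction hx using Submodule.smul_induction_on' with
  | add x hx x' hx' h h' => simp [h, h']
  | smul a ha x hx =>
    induction hy using Submodule.smul_induction_on' with
    | add x hx x' hx' h h' =>
      simp only [map_add, LinearMap.add_apply, h.1, h.2, h'.1, h'.2, add_zero, and_self]
    | smul b hb y hy =>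
      have hab : a * b = 0 := by
        have := Ideal.mul_mem_mul ha hb
        rwa [h, Ideal.mem_bot] at this
      simp only [map_smul, LinearMap.smul_apply, smul_smul]
      rw [mul_comm b a, hab]; simp

/-- A linear projection onto a graded piece detects membership in `I • L^i`. -/
lemma mem_smul_grade (L : DGLA ℂ) (A : Type) [CommRing A] [Algebra ℂ A] (I : Ideal A) (i : ℤ)
    (x : A ⊗[ℂ] L.V) (hx : x ∈ I • (⊤ : Submodule A (A ⊗[ℂ] L.V)))
    (hi : x ∈ L.gradeA A i) : x ∈ I • L.gradeA A i := by
  obtain ⟨π, hπ⟩ := LinearMap.exists_leftInverse_of_injective (L.grade i).subtype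
    (Submodule.ker_subtype _)
  have hπ' : ∀ v (hv : v ∈ L.grade i), π v = ⟨v, hv⟩ := fun v hv =>
    LinearMap.congr_fun hπ ⟨v, hv⟩
  let P : A ⊗[ℂ] L.V →ₗ[A] A ⊗[ℂ] L.V := LinearMap.baseChange A ((L.grade i).subtype ∘ₗ π)
  have hfix : P x = x := by
    refine L.gradeA_induction A i (fun x => P x = x) ?_ ?_ ?_ x hi
    · simp
    · intro x y hx hy; rw [map_add, hx, hy]
    · intro a x hx; simp [P, hπ' x hx]
  have hmem : ∀ y, P y ∈ L.gradeA A i := by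
    intro y
    induction y with
    | zero => simp
    | add x y hx hy => rw [map_add]; exact add_mem hx hy
    | tmul a x =>
      simp only [P, LinearMap.baseChange_tmul]
      exact L.tmul_mem_gradeA A _ _ _ (π x).2
  rw [← hfix]
  have : P x ∈ (I • (⊤ : Submodule A (A ⊗[ℂ] L.V))).map P := Submodule.mem_map_of_mem hx
  rw [Submodule.map_smul''] at this
  refine Submodule.smul_mono le_rfl ?_ this
  rintro _ ⟨y, -, rfl⟩
  exact hmem y

end DGLA

/-- Let `0 → I → A → Ā → 0` be a small extension
(`I · m_A = 0`), `x ∈ MC_L(Ā)`, and `x̃ ∈ L^1 ⊗ m_A` any set-theoretic lifting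
of `x` (i.e. the Maurer-Cartan expression of `x̃` has coefficients in `I`).
Then `h = dx̃ + ½[x̃,x̃]` lies in `L^2 ⊗ I`, satisfies `dh = 0`, and its class in
`H^2(L,d) ⊗ I` is independent of the choice of lifting: for any other lifting
the two cocycles differ by the coboundary of an element of `L^1 ⊗ I`. -/
theorem stmt_4 (L : DGLA ℂ) (A : Type) [CommRing A] [Algebra ℂ A]
    [IsLocalRing A] [IsArtinianRing A]
    (I : Ideal A) (hI : I ≤ IsLocalRing.maximalIdeal A)
    (hsmall : I * IsLocalRing.maximalIdeal A = ⊥)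
    (xt : A ⊗[ℂ] L.V) (hxt : xt ∈ (IsLocalRing.maximalIdeal A) • L.gradeA A 1)
    (hbar : L.dA A xt + algebraMap ℂ A 2⁻¹ • L.brA A xt xt ∈
      I • (⊤ : Submodule A (A ⊗[ℂ] L.V))) :
    L.dA A xt + algebraMap ℂ A 2⁻¹ • L.brA A xt xt ∈ I • L.gradeA A 2 ∧
    L.dA A (L.dA A xt + algebraMap ℂ A 2⁻¹ • L.brA A xt xt) = 0 ∧
    (∀ xt' : A ⊗[ℂ] L.V, xt' ∈ (IsLocalRing.maximalIdeal A) • L.gradeA A 1 →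
      xt - xt' ∈ I • (⊤ : Submodule A (A ⊗[ℂ] L.V)) →
      ∃ p ∈ I • L.gradeA A 1,
        (L.dA A xt' + algebraMap ℂ A 2⁻¹ • L.brA A xt' xt')
          - (L.dA A xt + algebraMap ℂ A 2⁻¹ • L.brA A xt xt) = L.dA A p) := by
  have hgr : ∀ y, y ∈ (IsLocalRing.maximalIdeal A) • L.gradeA A 1 → y ∈ L.gradeA A 1 :=
    fun y hy => Submodule.smul_le_right hy
  have htop : ∀ (J : Ideal A) y, y ∈ J • L.gradeA A 1 →
      y ∈ J • (⊤ : Submodule A (A ⊗[ℂ] L.V)) :=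
    fun J y hy => Submodule.smul_mono le_rfl le_top hy
  have hx1 := hgr _ hxt
  have hxm := htop _ _ hxt
  have hd1 : L.dA A xt ∈ L.gradeA A 2 := L.dA_mem' A 1 xt hx1
  have hb1 : L.brA A xt xt ∈ L.gradeA A 2 := L.brA_mem' A 1 1 xt xt hx1 hx1
  refine ⟨?_, ?_, ?_⟩
  · exact L.mem_smul_grade A I 2 _ hbar
      (Submodule.add_mem _ hd1 (Submodule.smul_mem _ _ hb1))
  · have h0 := (L.brA_smul_zero A I _ hsmall _ xt hbar hxm).1
    have hs := L.skewA A 1 2 xt (L.dA A xt) hx1 hd1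
    have hs2 := L.skewA A 1 2 xt (L.brA A xt xt) hx1 hb1
    have hj := L.jacobiA A 1 1 xt xt xt hx1 hx1
    have hl := L.leibnizA A 1 xt xt hx1
    have e2 : gsign (1 * 2) = 1 := by decide
    have e1 : gsign (1 * 1) = -1 := by decide
    have e0 : gsign 1 = -1 := by decide
    rw [e2, one_smul] at hs hs2
    rw [e1, neg_one_smul] at hj
    rw [e0, neg_one_smul] at hl
    simp only [map_add, map_smul, LinearMap.add_apply, LinearMap.smul_apply, L.dA_sq] at h0 ⊢
    simp only [algebraMap_smul] at h0 ⊢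
    rw [hl]
    generalize L.brA A xt (L.dA A xt) = u at *
    generalize L.brA A (L.dA A xt) xt = v at *
    generalize L.brA A xt (L.brA A xt xt) = w at *
    generalize L.brA A (L.brA A xt xt) xt = z at *
    have hu : u = -v := eq_neg_of_add_eq_zero_left hs
    have hw : w = -z := eq_neg_of_add_eq_zero_left hs2
    subst hu hw
    have hz : (3 : ℂ) • z = 0 := by
      have : -z - (z + - -z) = 0 := sub_eq_zero.mpr hj
      rw [← neg_eq_zero, ← this]; module
    have hz : z = 0 := (smul_eq_zero.mp hz).resolve_left (by norm_num)
    subst hz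
    have : v = 0 := by simpa using h0
    subst this
    simp
  · intro xt' hxt' hdiff
    have hx1' := hgr _ hxt'
    have hp : xt' - xt ∈ I • (⊤ : Submodule A (A ⊗[ℂ] L.V)) := by
      rw [← neg_sub]; exact Submodule.neg_mem _ hdiff
    refine ⟨xt' - xt, L.mem_smul_grade A I 1 _ hp (Submodule.sub_mem _ hx1' hx1), ?_⟩
    have h1 := (L.brA_smul_zero A I _ hsmall _ xt' hp (htop _ _ hxt')).1
    have h2 := (L.brA_smul_zero A I _ hsmall _ xt hp hxm).2
    have h3 : L.brA A xt' xt' = L.brA A xt xt := by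
      simp only [map_sub, LinearMap.sub_apply] at h1 h2
      rw [sub_eq_zero.mp h1, sub_eq_zero.mp h2]
    rw [h3, map_sub]; abel
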